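/- In a finite Markov decision process, if an initial distribution d0 is not almost-sure winning for the reachability objective ◇T, then for all strategies σ and all steps i ≥ 0, the probability of being in T at step i is at most 1 − α0·α^n, where n is the number of states, α is the smallest positive transition probability, and α0 is the smallest positive probability in d0. -/

import Mathlib

open scoped BigOperators
open Classical Filter

/-- A finite Markov decision process with real transition probabilities. -/
structure MDP (Q A : Type) [Fintype Q] [Fintype A] where
  δ : Q → A → Q → ℝ
  δ_nonneg : ∀ q a q', 0 ≤ δ q a q'
  δ_sum : ∀ q a, ∑ q', δ q a q' = 1

namespace MDP

variable {Q A : Type} [Fintype Q] [Fintype A]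

/-- `d` is a probability distribution. -/
def IsDist (d : Q → ℝ) : Prop := (∀ q, 0 ≤ d q) ∧ ∑ q, d q = 1

/-- A (randomized, history-dependent) strategy maps a history (list of past
state-action pairs) and the current state to a distribution over actions. -/
def IsStrategy (σ : List (Q × A) → Q → A → ℝ) : Prop :=
  (∀ h q a, 0 ≤ σ h q a) ∧ ∀ h q, ∑ a, σ h q a = 1

/-- The probability of the finite path `qs` (with actions `as`) of length `i`,
under strategy `σ` from initial distribution `d0`. -/
noncomputable def pathProb (M : MDP Q A) (σ : List (Q × A) → Q → A → ℝ)
    (d0 : Q → ℝ) (i : ℕ) (qs : Fin (i + 1) → Q) (as : Fin i → A) : ℝ :=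
  d0 (qs 0) * ∏ j : Fin i,
    (σ (List.ofFn (fun k : Fin j.val =>
          (qs ⟨k.val, by have := k.isLt; have := j.isLt; omega⟩,
           as ⟨k.val, by have := k.isLt; have := j.isLt; omega⟩)))
        (qs j.castSucc) (as j))
      * M.δ (qs j.castSucc) (as j) (qs j.succ)

/-- The distribution over states after `i` steps (`M^σ_i`). -/
noncomputable def stepDist (M : MDP Q A) (σ : List (Q × A) → Q → A → ℝ)
    (d0 : Q → ℝ) (i : ℕ) (q : Q) : ℝ :=
  ∑ qs : Fin (i + 1) → Q, ∑ as : Fin i → A,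
    if qs (Fin.last i) = q then M.pathProb σ d0 i qs as else 0

/-- The probability mass that a (sub)distribution assigns to a set `T`. -/
noncomputable def mass (d : Q → ℝ) (T : Set Q) : ℝ := ∑ q, T.indicator d q

/-- The support of a (sub)distribution. -/
def supp {α : Type} (d : α → ℝ) : Set α := {q | 0 < d q}

/-- One-step sure predecessors of `Y`. -/
def Pre (M : MDP Q A) (Y : Set Q) : Set Q :=
  {q | ∃ a, ∀ q', 0 < M.δ q a q' → q' ∈ Y}

/-- Probability of reaching `T` within `i` steps. -/
noncomputable def reachProb (M : MDP Q A) (σ : List (Q × A) → Q → A → ℝ)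
    (d0 : Q → ℝ) (T : Set Q) (i : ℕ) : ℝ :=
  ∑ qs : Fin (i + 1) → Q, ∑ as : Fin i → A,
    if ∃ j, qs j ∈ T then M.pathProb σ d0 i qs as else 0

/-- `d0` is almost-sure winning for the reachability objective `◇T`:
some strategy reaches `T` with probability one. -/
def ASReach (M : MDP Q A) (d0 : Q → ℝ) (T : Set Q) : Prop :=
  ∃ σ, IsStrategy σ ∧ (⨆ i : ℕ, M.reachProb σ d0 T i) = 1

/-- `d0` is limit-sure eventually synchronizing in `T`. -/
def LimitSureEventually (M : MDP Q A) (d0 : Q → ℝ) (T : Set Q) : Prop :=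
  ∀ ε > (0 : ℝ), ∃ σ, IsStrategy σ ∧ ∃ i, 1 - ε ≤ mass (M.stepDist σ d0 i) T

/-- `d0` is almost-sure weakly synchronizing in `T`. -/
def ASWeakly (M : MDP Q A) (d0 : Q → ℝ) (T : Set Q) : Prop :=
  ∃ σ, IsStrategy σ ∧ ∀ ε > (0 : ℝ), {i : ℕ | 1 - ε ≤ mass (M.stepDist σ d0 i) T}.Infinite

/-- `d0` is almost-sure strongly synchronizing in `T`. -/
def ASStrongly (M : MDP Q A) (d0 : Q → ℝ) (T : Set Q) : Prop :=
  ∃ σ, IsStrategy σ ∧ ∀ ε > (0 : ℝ), ∃ N, ∀ i ≥ N, 1 - ε ≤ mass (M.stepDist σ d0 i) T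

/-- The uniform distribution on a set `S`. -/
noncomputable def uniformOn (S : Set Q) : Q → ℝ :=
  fun q => if q ∈ S then 1 / (S.ncard : ℝ) else 0

/-- The uniform strategy, playing all actions uniformly at random. -/
noncomputable def uniformStrategy (Q A : Type) [Fintype A] :
    List (Q × A) → Q → A → ℝ :=
  fun _ _ _ => 1 / (Fintype.card A : ℝ)

/-- Action `a` is allowed in `q` w.r.t. `S` if all its successors stay in `S`. -/
def Allowed (M : MDP Q A) (S : Set Q) (q : Q) (a : A) : Prop :=
  ∀ q', 0 < M.δ q a q' → q' ∈ S

/-- Edge relation within `S` given the allowed actions. -/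
def ECEdge (M : MDP Q A) (S : Set Q) (q q' : Q) : Prop :=
  q ∈ S ∧ q' ∈ S ∧ ∃ a, M.Allowed S q a ∧ 0 < M.δ q a q'

/-- `S` is an end-component: closed and strongly connected via allowed actions. -/
def IsEC (M : MDP Q A) (S : Set Q) : Prop :=
  (∀ q ∈ S, ∃ a, M.Allowed S q a) ∧
  ∀ q ∈ S, ∀ q' ∈ S, Relation.ReflTransGen (M.ECEdge S) q q'

/-- The union of all end-components. -/
def ECUnion (M : MDP Q A) : Set Q := ⋃₀ {S | M.IsEC S}

/-- Positive always synchronizing in `T`. -/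
def PosAlways (M : MDP Q A) (d0 : Q → ℝ) (T : Set Q) : Prop :=
  ∃ σ, IsStrategy σ ∧ ∀ i, 0 < mass (M.stepDist σ d0 i) T

/-- Positive eventually synchronizing in `T`. -/
def PosEvent (M : MDP Q A) (d0 : Q → ℝ) (T : Set Q) : Prop :=
  ∃ σ, IsStrategy σ ∧ ∃ i, 0 < mass (M.stepDist σ d0 i) T

/-- Positive weakly synchronizing in `T`. -/
def PosWeakly (M : MDP Q A) (d0 : Q → ℝ) (T : Set Q) : Prop :=
  ∃ σ, IsStrategy σ ∧ ∀ N, ∃ i ≥ N, 0 < mass (M.stepDist σ d0 i) T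

/-- Positive strongly synchronizing in `T`. -/
def PosStrongly (M : MDP Q A) (d0 : Q → ℝ) (T : Set Q) : Prop :=
  ∃ σ, IsStrategy σ ∧ ∃ N, ∀ i ≥ N, 0 < mass (M.stepDist σ d0 i) T

/-- Bounded always synchronizing in `T`. -/
def BndAlways (M : MDP Q A) (d0 : Q → ℝ) (T : Set Q) : Prop :=
  ∃ σ, IsStrategy σ ∧ ∃ ε > (0 : ℝ), ∀ i, ε < mass (M.stepDist σ d0 i) T

/-- Bounded eventually synchronizing in `T`. -/
def BndEvent (M : MDP Q A) (d0 : Q → ℝ) (T : Set Q) : Prop :=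
  ∃ σ, IsStrategy σ ∧ ∃ ε > (0 : ℝ), ∃ i, ε < mass (M.stepDist σ d0 i) T

/-- Bounded weakly synchronizing in `T`. -/
def BndWeakly (M : MDP Q A) (d0 : Q → ℝ) (T : Set Q) : Prop :=
  ∃ σ, IsStrategy σ ∧ ∃ ε > (0 : ℝ), ∀ N, ∃ i ≥ N, ε < mass (M.stepDist σ d0 i) T

/-- Bounded strongly synchronizing in `T`. -/
def BndStrongly (M : MDP Q A) (d0 : Q → ℝ) (T : Set Q) : Prop :=
  ∃ σ, IsStrategy σ ∧ ∃ ε > (0 : ℝ), ∃ N, ∀ i ≥ N, ε < mass (M.stepDist σ d0 i) T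

end MDP

namespace MDP

variable {Q A : Type} [Fintype Q] [Fintype A]

/-- Elementary bound on the expectation of a function bounded by one. -/
lemma aux_expect_le (p u : Q → ℝ) (hp : ∀ q, 0 ≤ p q) (hs : ∑ q, p q = 1)
    (hu : ∀ q, u q ≤ 1) (q0 : Q) : ∑ q, p q * u q ≤ 1 - p q0 * (1 - u q0) := by
  have h1 : ∑ q, p q * (1 - u q) = 1 - ∑ q, p q * u q := by
    simp only [mul_sub, mul_one, Finset.sum_sub_distrib, hs]
  have h2 : p q0 * (1 - u q0) ≤ ∑ q, p q * (1 - u q) :=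
    Finset.single_le_sum (f := fun q => p q * (1 - u q))
      (fun q _ => mul_nonneg (hp q) (by linarith [hu q])) (Finset.mem_univ q0)
  linarith

/-- A superharmonic function certifying that `C` is losing. -/
def Cert (M : MDP Q A) (T : Set Q) (α : ℝ) (C : Finset Q) (u : Q → ℝ) : Prop :=
  (∀ q, 0 ≤ u q) ∧ (∀ q, u q ≤ 1) ∧ (∀ q, q ∉ C → u q = 1) ∧ (∀ q ∈ C, q ∉ T) ∧
  (∀ q a, ∑ q', M.δ q a q' * u q' ≤ u q) ∧ (∀ q ∈ C, u q ≤ 1 - α ^ C.card)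

lemma cert_extend (M : MDP Q A) (T : Set Q) (α : ℝ) (hα0 : 0 < α) (hα1 : α ≤ 1)
    (hα : ∀ q a q', 0 < M.δ q a q' → α ≤ M.δ q a q')
    (C : Finset Q) (u : Q → ℝ) (h : Cert M T α C u) (G : Finset Q) (hG : G.Nonempty)
    (hGC : ∀ q ∈ G, q ∉ C) (hGT : ∀ q ∈ G, q ∉ T)
    (hst : ∀ q ∈ G, ∀ a, (∃ q' ∈ C, 0 < M.δ q a q') ∨ ∀ q', 0 < M.δ q a q' → q' ∈ G) :
    ∃ u', Cert M T α (C ∪ G) u' ∧ C.card < (C ∪ G).card := by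
  obtain ⟨h0, h1, h2, h3, h4, h5⟩ := h
  have hcard : C.card < (C ∪ G).card := by
    apply Finset.card_lt_card
    refine ⟨Finset.subset_union_left, fun hs => ?_⟩
    obtain ⟨g, hg⟩ := hG
    exact hGC g hg (hs (Finset.mem_union_right _ hg))
  have hpow : α ^ (C ∪ G).card ≤ α ^ (C.card + 1) := pow_le_pow_of_le_one hα0.le hα1 hcard
  have hpow' : α ^ (C.card + 1) ≤ α ^ C.card := pow_le_pow_of_le_one hα0.le hα1 (by omega)
  have hc1 : α ^ (C.card + 1) ≤ 1 := pow_le_one₀ hα0.le hα1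
  have hc0 : 0 ≤ α ^ (C.card + 1) := by positivity
  have hle : ∀ q, (if q ∈ G then 1 - α ^ (C.card + 1) else u q) ≤ u q := by
    intro q
    split_ifs with hq
    · rw [h2 q (hGC q hq)]; linarith
    · exact le_rfl
  have hle1 : ∀ q, (if q ∈ G then 1 - α ^ (C.card + 1) else u q) ≤ 1 :=
    fun q => (hle q).trans (h1 q)
  refine ⟨fun q => if q ∈ G then 1 - α ^ (C.card + 1) else u q, ⟨?_, hle1, ?_, ?_, ?_, ?_⟩, hcard⟩
  · intro q
    dsimp only
    split_ifs
    · linarith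
    · exact h0 q
  · intro q hq
    simp only [Finset.mem_union, not_or] at hq
    simp [hq.2, h2 q hq.1]
  · intro q hq
    rcases Finset.mem_union.1 hq with hq | hq
    · exact h3 q hq
    · exact hGT q hq
  · intro q a
    by_cases hq : q ∈ G
    · simp only [hq, if_true]
      rcases hst q hq a with ⟨q0, hq0, hpos⟩ | hall
      · refine (aux_expect_le (M.δ q a) _ (M.δ_nonneg q a) (M.δ_sum q a) hle1 q0).trans ?_
        have hq0G : q0 ∉ G := fun hh => hGC q0 hh hq0
        simp only [hq0G, if_false]
        have : α * α ^ C.card ≤ M.δ q a q0 * (1 - u q0) :=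
          mul_le_mul (hα q a q0 hpos) (by linarith [h5 q0 hq0]) (by positivity) hpos.le
        rw [pow_succ]; linarith
      · have : ∀ q', M.δ q a q' * (if q' ∈ G then 1 - α ^ (C.card + 1) else u q')
            = M.δ q a q' * (1 - α ^ (C.card + 1)) := by
          intro q'
          rcases (M.δ_nonneg q a q').eq_or_lt with hz | hz
          · rw [← hz]; simp
          · simp [hall q' hz]
        simp only [this]
        rw [← Finset.sum_mul, M.δ_sum, one_mul]
    · simp only [hq, if_false]
      refine le_trans (Finset.sum_le_sum fun q' _ => ?_) (h4 q a)
      exact mul_le_mul_of_nonneg_left (hle q') (M.δ_nonneg q a q')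
  · intro q hq
    dsimp only
    split_ifs with hqG
    · linarith
    · rcases Finset.mem_union.1 hq with hq | hq
      · linarith [h5 q hq]
      · exact absurd hq hqG

/-- A maximal certified losing set. -/
lemma exists_max_cert (M : MDP Q A) (T : Set Q) (α : ℝ) (hα0 : 0 < α) (hα1 : α ≤ 1)
    (hα : ∀ q a q', 0 < M.δ q a q' → α ≤ M.δ q a q') :
    ∃ C : Finset Q, ∃ u, Cert M T α C u ∧ ∀ G : Finset Q, G.Nonempty →
      (∀ q ∈ G, q ∉ C) → (∀ q ∈ G, q ∉ T) →
      (∀ q ∈ G, ∀ a, (∃ q' ∈ C, 0 < M.δ q a q') ∨ ∀ q', 0 < M.δ q a q' → q' ∈ G) → False := by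
  have hne : ((Finset.univ : Finset (Finset Q)).filter
      (fun C => ∃ u, Cert M T α C u)).Nonempty := by
    refine ⟨∅, Finset.mem_filter.2 ⟨Finset.mem_univ _, fun _ => 1, ?_⟩⟩
    refine ⟨by simp, by simp, by simp, by simp, ?_, by simp⟩
    intro q a
    simp [M.δ_sum]
  obtain ⟨C, hC, hmax⟩ := Finset.exists_max_image _ (fun C : Finset Q => C.card) hne
  obtain ⟨u, hu⟩ := (Finset.mem_filter.1 hC).2
  refine ⟨C, u, hu, fun G hG h1 h2 h3 => ?_⟩
  obtain ⟨u', hu', hlt⟩ := cert_extend M T α hα0 hα1 hα C u hu G hG h1 h2 h3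
  have := hmax (C ∪ G) (Finset.mem_filter.2 ⟨Finset.mem_univ _, u', hu'⟩)
  omega

/-- History of a finite path. -/
def hist (i : ℕ) (qs : Fin (i + 1) → Q) (as : Fin i → A) : List (Q × A) :=
  List.ofFn (fun k : Fin i => (qs k.castSucc, as k))

/-- Expectation of `g` at step `i` on paths avoiding `T`. -/
noncomputable def expAvoid (M : MDP Q A) (σ : List (Q × A) → Q → A → ℝ)
    (d0 : Q → ℝ) (T : Set Q) (i : ℕ) (g : Q → ℝ) : ℝ :=
  ∑ qs : Fin (i + 1) → Q, ∑ as : Fin i → A,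
    if ∀ j, qs j ∉ T then M.pathProb σ d0 i qs as * g (qs (Fin.last i)) else 0

lemma pathProb_snoc (M : MDP Q A) (σ : List (Q × A) → Q → A → ℝ)
    (d0 : Q → ℝ) (i : ℕ) (qs : Fin (i + 1) → Q) (as : Fin i → A) (q' : Q) (a : A) :
    M.pathProb σ d0 (i + 1) (Fin.snoc (α := fun _ => Q) qs q') (Fin.snoc (α := fun _ => A) as a)
      = M.pathProb σ d0 i qs as * (σ (hist i qs as) (qs (Fin.last i)) a
          * M.δ (qs (Fin.last i)) a q') := by
  unfold pathProb
  rw [Fin.prod_univ_castSucc, ← mul_assoc]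
  congr 1
  · congr 1
    · refine Finset.prod_congr rfl fun j _ => ?_
      have e1 : (j.castSucc).succ = (j.succ).castSucc := rfl
      rw [e1]
      simp only [Fin.snoc_castSucc]
      congr 3
      funext k
      have hk := k.isLt
      have hj := j.isLt
      simp only [Fin.val_castSucc] at hk
      refine Prod.ext ?_ ?_
      · exact Fin.snoc_castSucc (α := fun _ => Q) q' qs ⟨k.val, by omega⟩
      · exact Fin.snoc_castSucc (α := fun _ => A) a as ⟨k.val, by omega⟩
  · rw [Fin.succ_last]
    simp only [Fin.snoc_castSucc, Fin.snoc_last]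
    congr 2
    unfold hist
    apply List.ofFn_inj.2
    funext k
    refine Prod.ext ?_ ?_
    · exact Fin.snoc_castSucc (α := fun _ => Q) q' qs k.castSucc
    · exact Fin.snoc_castSucc (α := fun _ => A) a as k

lemma sum_snoc {X : Type} [Fintype X] (i : ℕ) (F : (Fin (i + 1) → X) → ℝ) :
    ∑ f, F f = ∑ f : Fin i → X, ∑ x : X, F (Fin.snoc (α := fun _ => X) f x) := by
  rw [← (Fin.snocEquiv (fun _ : Fin (i + 1) => X)).sum_comp, Fintype.sum_prod_type,
    Finset.sum_comm]
  rfl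

lemma pathProb_nonneg (M : MDP Q A) (σ : List (Q × A) → Q → A → ℝ) (hσ : IsStrategy σ)
    (d0 : Q → ℝ) (hd : IsDist d0) (i : ℕ) (qs : Fin (i + 1) → Q) (as : Fin i → A) :
    0 ≤ M.pathProb σ d0 i qs as :=
  mul_nonneg (hd.1 _) (Finset.prod_nonneg fun _ _ => mul_nonneg (hσ.1 _ _ _) (M.δ_nonneg _ _ _))

lemma expAvoid_zero (M : MDP Q A) (σ : List (Q × A) → Q → A → ℝ)
    (d0 : Q → ℝ) (T : Set Q) (g : Q → ℝ) :
    M.expAvoid σ d0 T 0 g = ∑ q, if q ∉ T then d0 q * g q else 0 := by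
  unfold expAvoid
  rw [← (Equiv.funUnique (Fin 1) Q).symm.sum_comp]
  refine Finset.sum_congr rfl fun q _ => ?_
  simp [pathProb]

lemma expAvoid_succ (M : MDP Q A) (σ : List (Q × A) → Q → A → ℝ)
    (d0 : Q → ℝ) (T : Set Q) (i : ℕ) (g : Q → ℝ) :
    M.expAvoid σ d0 T (i + 1) g = ∑ qs : Fin (i + 1) → Q, ∑ as : Fin i → A,
      if ∀ j, qs j ∉ T then M.pathProb σ d0 i qs as *
        ∑ a, σ (hist i qs as) (qs (Fin.last i)) a *
          ∑ q', M.δ (qs (Fin.last i)) a q' * (if q' ∈ T then 0 else g q') else 0 := by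
  unfold expAvoid
  rw [sum_snoc]
  refine Finset.sum_congr rfl fun qs _ => ?_
  simp only [sum_snoc (X := A)]
  rw [Finset.sum_comm]
  refine Finset.sum_congr rfl fun as _ => ?_
  rw [Finset.sum_comm]
  have hall : ∀ q', (∀ j, (Fin.snoc (α := fun _ => Q) qs q' : Fin (i + 1 + 1) → Q) j ∉ T) ↔
      (∀ j, qs j ∉ T) ∧ q' ∉ T := by
    intro q'
    rw [Fin.forall_fin_succ']
    simp only [Fin.snoc_castSucc, Fin.snoc_last]
  simp only [hall, pathProb_snoc, Fin.snoc_last]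
  by_cases h : ∀ j, qs j ∉ T
  · simp only [h, if_true, true_and, Finset.mul_sum, not_false_iff, implies_true]
    refine Finset.sum_congr rfl fun a _ => Finset.sum_congr rfl fun q' _ => ?_
    split_ifs <;> first | contradiction | ring
  · simp [h]

lemma expAvoid_super (M : MDP Q A) (σ : List (Q × A) → Q → A → ℝ) (hσ : IsStrategy σ)
    (d0 : Q → ℝ) (hd : IsDist d0) (u : Q → ℝ)
    (hu : ∀ q a, ∑ q', M.δ q a q' * u q' ≤ u q) (i : ℕ) :
    M.expAvoid σ d0 ∅ i u ≤ ∑ q, d0 q * u q := by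
  induction i with
  | zero => rw [expAvoid_zero]; simp
  | succ i ih =>
    refine le_trans ?_ ih
    rw [expAvoid_succ]
    unfold expAvoid
    refine Finset.sum_le_sum fun qs _ => Finset.sum_le_sum fun as _ => ?_
    simp only [Set.mem_empty_iff_false, not_false_iff, implies_true, if_true, if_false]
    refine mul_le_mul_of_nonneg_left ?_ (pathProb_nonneg M σ hσ d0 hd i qs as)
    calc _ ≤ ∑ a, σ (hist i qs as) (qs (Fin.last i)) a * u (qs (Fin.last i)) :=
          Finset.sum_le_sum fun a _ => mul_le_mul_of_nonneg_left (hu _ a) (hσ.1 _ _ _)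
      _ = _ := by rw [← Finset.sum_mul, hσ.2, one_mul]

lemma expAvoid_one (M : MDP Q A) (σ : List (Q × A) → Q → A → ℝ) (hσ : IsStrategy σ)
    (d0 : Q → ℝ) (hd : IsDist d0) (i : ℕ) :
    M.expAvoid σ d0 ∅ i (fun _ => 1) = 1 := by
  induction i with
  | zero => rw [expAvoid_zero]; simp [hd.2]
  | succ i ih =>
    rw [expAvoid_succ]
    refine Eq.trans ?_ ih
    unfold expAvoid
    simp [M.δ_sum, hσ.2]

lemma reach_add (M : MDP Q A) (σ : List (Q × A) → Q → A → ℝ) (hσ : IsStrategy σ)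
    (d0 : Q → ℝ) (hd : IsDist d0) (T : Set Q) (i : ℕ) :
    M.reachProb σ d0 T i = 1 - M.expAvoid σ d0 T i (fun _ => 1) := by
  rw [eq_sub_iff_add_eq]
  refine Eq.trans ?_ (expAvoid_one M σ hσ d0 hd i)
  unfold reachProb expAvoid
  simp only [← Finset.sum_add_distrib]
  refine Finset.sum_congr rfl fun qs _ => Finset.sum_congr rfl fun as _ => ?_
  by_cases h : ∃ j, qs j ∈ T
  · have h' : ¬ ∀ j, qs j ∉ T := by push Not; exact h
    simp [h, h']
  · have h' : ∀ j, qs j ∉ T := by push Not at h; exact h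
    simp [h']

lemma mass_le (M : MDP Q A) (σ : List (Q × A) → Q → A → ℝ) (hσ : IsStrategy σ)
    (d0 : Q → ℝ) (hd : IsDist d0) (T : Set Q) (u : Q → ℝ) (hu0 : ∀ q, 0 ≤ u q)
    (hu1 : ∀ q ∈ T, u q = 1) (i : ℕ) :
    mass (M.stepDist σ d0 i) T ≤ M.expAvoid σ d0 ∅ i u := by
  have h1 : mass (M.stepDist σ d0 i) T ≤ ∑ q, M.stepDist σ d0 i q * u q := by
    unfold mass
    refine Finset.sum_le_sum fun q _ => ?_
    have hnn : 0 ≤ M.stepDist σ d0 i q := by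
      refine Finset.sum_nonneg fun qs _ => Finset.sum_nonneg fun as _ => ?_
      split_ifs
      · exact pathProb_nonneg M σ hσ d0 hd i qs as
      · exact le_rfl
    by_cases hq : q ∈ T
    · simp [hq, hu1 q hq]
    · simp only [hq, Set.indicator_of_notMem, not_false_iff]
      exact mul_nonneg hnn (hu0 q)
  refine h1.trans (le_of_eq ?_)
  unfold stepDist expAvoid
  simp only [Finset.sum_mul]
  rw [Finset.sum_comm]
  refine Finset.sum_congr rfl fun qs _ => ?_
  rw [Finset.sum_comm]
  refine Finset.sum_congr rfl fun as _ => ?_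
  simp [ite_mul]

/-- One-step operator of a memoryless strategy, killed on `T`. -/
noncomputable def killOp (M : MDP Q A) (s : Q → A → ℝ) (T : Set Q) (g : Q → ℝ) : Q → ℝ :=
  fun q => ∑ a, s q a * ∑ q', M.δ q a q' * (if q' ∈ T then 0 else g q')

lemma expAvoid_memoryless (M : MDP Q A) (s : Q → A → ℝ) (d0 : Q → ℝ) (T : Set Q) (i : ℕ) :
    ∀ g : Q → ℝ, M.expAvoid (fun _ => s) d0 T i g
      = ∑ q, if q ∉ T then d0 q * ((killOp M s T)^[i] g) q else 0 := by
  induction i with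
  | zero => intro g; rw [expAvoid_zero]; rfl
  | succ i ih =>
    intro g
    rw [expAvoid_succ, Function.iterate_succ_apply, ← ih]
    rfl

lemma killOp_mono (M : MDP Q A) (s : Q → A → ℝ) (hs : ∀ q a, 0 ≤ s q a) (T : Set Q) :
    Monotone (killOp M s T) := by
  intro g g' hg q
  refine Finset.sum_le_sum fun a _ => mul_le_mul_of_nonneg_left ?_ (hs q a)
  refine Finset.sum_le_sum fun q' _ => mul_le_mul_of_nonneg_left ?_ (M.δ_nonneg _ _ _)
  split_ifs
  · exact le_rfl
  · exact hg _

/-- Limit of the survival probabilities. -/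
lemma killOp_limit (M : MDP Q A) (s : Q → A → ℝ) (hs : ∀ q a, 0 ≤ s q a)
    (hs1 : ∀ q, ∑ a, s q a = 1) (T : Set Q) :
    ∃ f : Q → ℝ, (∀ q, 0 ≤ f q) ∧ killOp M s T f = f ∧
      ∀ q, Tendsto (fun i => ((killOp M s T)^[i] (fun _ => 1)) q) atTop (nhds (f q)) := by
  have hmono := killOp_mono M s hs T
  have h1 : killOp M s T (fun _ => 1) ≤ (fun _ => 1) := by
    intro q
    calc killOp M s T (fun _ => 1) q ≤ ∑ a, s q a * ∑ q', M.δ q a q' * 1 := by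
          refine Finset.sum_le_sum fun a _ => mul_le_mul_of_nonneg_left ?_ (hs q a)
          refine Finset.sum_le_sum fun q' _ => mul_le_mul_of_nonneg_left ?_ (M.δ_nonneg _ _ _)
          split_ifs <;> norm_num
      _ = 1 := by simp [M.δ_sum, hs1]
  have h0 : (fun _ => 0) ≤ killOp M s T (fun _ => 0) := by
    intro q
    simp [killOp]
  have hanti : Antitone (fun i => (killOp M s T)^[i] (fun _ => 1)) :=
    hmono.antitone_iterate_of_map_le h1
  have hnn : ∀ i q, 0 ≤ ((killOp M s T)^[i] (fun _ => 1)) q := by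
    intro i
    induction i with
    | zero => intro q; simp
    | succ i ih =>
      intro q
      rw [Function.iterate_succ_apply']
      exact (h0 q).trans (hmono (a := fun _ => 0) (fun q => ih q) q)
  have hlim : ∀ q, ∃ l, Tendsto (fun i => ((killOp M s T)^[i] (fun _ => 1)) q) atTop (nhds l) := by
    intro q
    refine ⟨_, tendsto_atTop_ciInf (fun i j hij => hanti hij q) ⟨0, ?_⟩⟩
    rintro _ ⟨i, rfl⟩
    exact hnn i q
  choose f hf using hlim
  refine ⟨f, fun q => ge_of_tendsto' (hf q) fun i => hnn i q, ?_, hf⟩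
  funext q
  refine tendsto_nhds_unique ?_ ((tendsto_add_atTop_iff_nat 1).2 (hf q))
  simp only [Function.iterate_succ_apply']
  refine tendsto_finsetSum _ fun a _ => Tendsto.const_mul _ ?_
  refine tendsto_finsetSum _ fun q' _ => Tendsto.const_mul _ ?_
  split_ifs
  · exact tendsto_const_nhds
  · exact hf q'

set_option maxHeartbeats 1000000 in
/-- If no further losing set can be added to `C`, the complement of `C` is winning. -/
lemma win_of_max (M : MDP Q A) (hA : Nonempty A) (T : Set Q) (C : Finset Q)
    (hmax : ∀ G : Finset Q, G.Nonempty → (∀ q ∈ G, q ∉ C) → (∀ q ∈ G, q ∉ T) →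
      (∀ q ∈ G, ∀ a, (∃ q' ∈ C, 0 < M.δ q a q') ∨ ∀ q', 0 < M.δ q a q' → q' ∈ G) → False)
    (d0 : Q → ℝ) (hd : IsDist d0) (hdC : ∀ q ∈ C, d0 q = 0) : M.ASReach d0 T := by
  let al : Q → Finset A := fun q => Finset.univ.filter (fun a => ∀ q' ∈ C, ¬ 0 < M.δ q a q')
  let B : Q → Finset A := fun q => if (al q).Nonempty then al q else Finset.univ
  have hB : ∀ q, (B q).Nonempty := by
    intro q
    by_cases h : (al q).Nonempty
    · simp only [B, h, if_true]
    · simp only [B, h, if_false]; exact Finset.univ_nonempty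
  have hBc : ∀ q, (0 : ℝ) < (B q).card := fun q => by exact_mod_cast (hB q).card_pos
  let s : Q → A → ℝ := fun q a => if a ∈ B q then 1 / ((B q).card : ℝ) else 0
  have hs : ∀ q a, 0 ≤ s q a := by
    intro q a
    simp only [s]
    split_ifs <;> positivity
  have hs1 : ∀ q, ∑ a, s q a = 1 := by
    intro q
    simp only [s, Finset.sum_ite_mem, Finset.univ_inter, Finset.sum_const, nsmul_eq_mul]
    exact mul_one_div_cancel (hBc q).ne'
  have hal : ∀ q, q ∉ C → q ∉ T → B q = al q := by
    intro q hqC hqT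
    have : (al q).Nonempty := by
      by_contra hne
      refine hmax {q} (Finset.singleton_nonempty q) (by simpa using hqC) (by simpa using hqT) ?_
      intro q1 hq1 a
      rw [Finset.mem_singleton] at hq1
      subst hq1
      left
      by_contra hcon
      push Not at hcon
      exact hne ⟨a, Finset.mem_filter.2 ⟨Finset.mem_univ _, fun q' hq' => not_lt.2 (hcon q' hq')⟩⟩
    simp only [B, this, if_true]
  obtain ⟨f, hf0, hfix, hlim⟩ := killOp_limit M s hs hs1 T
  -- the limit vanishes on the winning region
  have hzero : ∀ q, q ∉ C → q ∉ T → f q = 0 := by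
    by_contra hcon
    push Not at hcon
    obtain ⟨q1, hq1C, hq1T, hq1⟩ := hcon
    let W : Finset Q := Finset.univ.filter (fun q => q ∉ C ∧ q ∉ T)
    have hW : W.Nonempty := ⟨q1, by simp [W, hq1C, hq1T]⟩
    obtain ⟨qm, hqm, hm⟩ := Finset.exists_max_image W f hW
    have hmpos : 0 < f qm :=
      lt_of_lt_of_le (lt_of_le_of_ne (hf0 q1) (Ne.symm hq1)) (hm q1 (by simp [W, hq1C, hq1T]))
    refine hmax (W.filter (fun q => f q = f qm)) ⟨qm, by simp [hqm]⟩ ?_ ?_ ?_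
    · intro q hq
      simp only [W, Finset.mem_filter] at hq
      exact hq.1.2.1
    · intro q hq
      simp only [W, Finset.mem_filter] at hq
      exact hq.1.2.2
    · intro q hq a
      simp only [W, Finset.mem_filter, Finset.mem_univ, true_and] at hq
      obtain ⟨⟨hqC, hqT⟩, hqf⟩ := hq
      by_cases ha : a ∈ al q
      swap
      · left
        simpa [al] using ha
      right
      have halC : ∀ b ∈ al q, ∀ q' ∈ C, M.δ q b q' = 0 := by
        intro b hb q' hq'
        exact le_antisymm (not_lt.1 ((Finset.mem_filter.1 hb).2 q' hq')) (M.δ_nonneg _ _ _)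
      have hsz : ∀ b, b ∉ al q → s q b = 0 := by
        intro b hb
        simp [s, hal q hqC hqT, hb]
      have hterm : ∀ b q', 0 ≤ s q b * (M.δ q b q' * (f qm - (if q' ∈ T then 0 else f q'))) := by
        intro b q'
        by_cases hb : b ∈ al q
        · refine mul_nonneg (hs q b) ?_
          by_cases hq' : q' ∈ C
          · rw [halC b hb q' hq']; simp
          · refine mul_nonneg (M.δ_nonneg _ _ _) ?_
            split_ifs with hT
            · linarith
            · linarith [hm q' (by simp [W, hq', hT])]
        · rw [hsz b hb]; simp
      have hsum : ∑ b, ∑ q', s q b * (M.δ q b q' * (f qm - (if q' ∈ T then 0 else f q'))) = 0 := by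
        have e := congrFun hfix q
        simp only [killOp] at e
        simp only [mul_sub, Finset.sum_sub_distrib]
        simp only [← Finset.mul_sum, ← Finset.sum_mul, M.δ_sum, hs1, one_mul]
        rw [e, hqf, sub_self]
      intro q' hpos
      have hz1 := (Finset.sum_eq_zero_iff_of_nonneg
        (fun b _ => Finset.sum_nonneg fun q' _ => hterm b q')).1 hsum a (Finset.mem_univ _)
      have hz2 := (Finset.sum_eq_zero_iff_of_nonneg (fun q' _ => hterm a q')).1 hz1 q'
        (Finset.mem_univ _)
      have hsa : s q a ≠ 0 := by
        simp only [s, hal q hqC hqT, ha, if_true]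
        have := hBc q
        rw [hal q hqC hqT] at this
        positivity
      have hz3 : f qm - (if q' ∈ T then 0 else f q') = 0 := by
        rcases mul_eq_zero.1 hz2 with h | h
        · exact absurd h hsa
        · exact (mul_eq_zero.1 h).resolve_left hpos.ne'
      have hq'C : q' ∉ C := fun h => hpos.ne' (halC a ha q' h)
      split_ifs at hz3 with hT
      · linarith
      · simp only [W, Finset.mem_filter, Finset.mem_univ, true_and]
        exact ⟨⟨hq'C, hT⟩, by linarith⟩
  have hstr : IsStrategy (fun (_ : List (Q × A)) => s) := ⟨fun _ => hs, fun _ => hs1⟩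
  refine ⟨fun _ => s, hstr, ?_⟩
  have htend : Tendsto (fun i => M.reachProb (fun _ => s) d0 T i) atTop (nhds 1) := by
    have h2 : Tendsto (fun i => M.expAvoid (fun _ => s) d0 T i (fun _ => 1)) atTop (nhds 0) := by
      have h3 : (0 : ℝ) = ∑ q, if q ∉ T then d0 q * f q else 0 := by
        symm
        refine Finset.sum_eq_zero fun q _ => ?_
        split_ifs with hq
        · rfl
        · by_cases hqC : q ∈ C
          · simp [hdC q hqC]
          · simp [hzero q hqC hq]
      rw [h3]
      simp only [expAvoid_memoryless]
      refine tendsto_finsetSum _ fun q _ => ?_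
      split_ifs
      · exact tendsto_const_nhds
      · exact (hlim q).const_mul _
    simp only [reach_add M _ hstr d0 hd T]
    simpa using h2.const_sub 1
  have hle : ∀ i, M.reachProb (fun _ => s) d0 T i ≤ 1 := by
    intro i
    rw [reach_add M _ hstr d0 hd T]
    have : 0 ≤ M.expAvoid (fun _ => s) d0 T i (fun _ => 1) := by
      refine Finset.sum_nonneg fun qs _ => Finset.sum_nonneg fun as _ => ?_
      split_ifs
      · rw [mul_one]; exact pathProb_nonneg M _ hstr d0 hd i qs as
      · exact le_rfl
    linarith
  refine le_antisymm (ciSup_le hle) (le_of_tendsto' htend fun i => ?_)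
  exact le_ciSup (f := fun i => M.reachProb (fun _ => s) d0 T i)
    ⟨1, by rintro _ ⟨i, rfl⟩; exact hle i⟩ i

end MDP

open MDP in
/-- If `d0` is not almost-sure winning for reaching `T`, then under every strategy,
at every step, the probability of being in `T` is at most `1 - α0 * α ^ n`. -/
theorem stmt0 {Q A : Type} [Fintype Q] [Fintype A] (M : MDP Q A)
    (d0 : Q → ℝ) (hd0 : IsDist d0) (T : Set Q) (α α0 : ℝ)
    (hα : IsLeast {x : ℝ | 0 < x ∧ ∃ q a q', M.δ q a q' = x} α)
    (hα0 : IsLeast {x : ℝ | 0 < x ∧ ∃ q, d0 q = x} α0)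
    (h : ¬ M.ASReach d0 T) :
    ∀ σ, IsStrategy σ → ∀ i : ℕ,
      mass (M.stepDist σ d0 i) T ≤ 1 - α0 * α ^ Fintype.card Q := by
  intro σ hσ i
  obtain ⟨⟨hαpos, q1, a1, q2, hδ⟩, hαmin⟩ := hα
  have hα1 : α ≤ 1 := by
    rw [← hδ, ← M.δ_sum q1 a1]
    exact Finset.single_le_sum (fun q _ => M.δ_nonneg q1 a1 q) (Finset.mem_univ q2)
  obtain ⟨C, u, ⟨h0, h1, h2, h3, h4, h5⟩, hmax⟩ := exists_max_cert M T α hαpos hα1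
    (fun q a q' hp => hαmin ⟨hp, q, a, q', rfl⟩)
  by_cases hC : ∀ q ∈ C, d0 q = 0
  · exact absurd (win_of_max M ⟨a1⟩ T C hmax d0 hd0 hC) h
  push Not at hC
  obtain ⟨q, hqC, hq⟩ := hC
  have hqpos : 0 < d0 q := lt_of_le_of_ne (hd0.1 q) (Ne.symm hq)
  have hα0q : α0 ≤ d0 q := hα0.2 ⟨hqpos, q, rfl⟩
  refine (mass_le M σ hσ d0 hd0 T u h0 (fun q hqT => h2 q fun hh => h3 q hh hqT) i).trans ?_
  refine (expAvoid_super M σ hσ d0 hd0 u h4 i).trans ?_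
  refine (aux_expect_le d0 u hd0.1 hd0.2 h1 q).trans ?_
  have hp : α ^ Fintype.card Q ≤ α ^ C.card :=
    pow_le_pow_of_le_one hαpos.le hα1 (Finset.card_le_univ C)
  have : α0 * α ^ Fintype.card Q ≤ d0 q * (1 - u q) :=
    mul_le_mul hα0q (by linarith [h5 q hqC]) (by positivity) hqpos.le
  linarith
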